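/- Let u, ψ₁, ψ₂ : ℝ² → ℝ be smooth functions of (x,t) and Λ ∈ ℝ, and suppose (ψ₁,ψ₂)ᵀ satisfies the mKdV Lax pair: (ψ₁)_x = −u·ψ₁ + Λ·ψ₂, (ψ₂)_x = Λ·ψ₁ + u·ψ₂, (ψ₁)_t = (u_xx − 2u³ + 4Λ²u)ψ₁ + 2Λ(u² − u_x − 2Λ²)ψ₂, (ψ₂)_t = 2Λ(u² + u_x − 2Λ²)ψ₁ − (u_xx − 2u³ + 4Λ²u)ψ₂. Set λ = −Λ², m₁ = u² − u_x and m₂ = u² + u_x. Then for i = 1, 2 the component ψ_i satisfies the scalar KdV Lax pair: (ψ_i)_xx = (m_i − λ)ψ_i and (ψ_i)_t = (2m_i + 4λ)(ψ_i)_x − (m_i)_x·ψ_i. -/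

import Mathlib

noncomputable section

/-- Partial derivative of `f` with respect to its first argument. -/
def d1 (f : ℝ → ℝ → ℝ) : ℝ → ℝ → ℝ := fun a b => deriv (fun a' => f a' b) a

/-- Partial derivative of `f` with respect to its second argument. -/
def d2 (f : ℝ → ℝ → ℝ) : ℝ → ℝ → ℝ := fun a b => deriv (fun b' => f a b') b

/-- Smoothness of a two-variable real function. -/
def Smooth2 (f : ℝ → ℝ → ℝ) : Prop := ContDiff ℝ (⊤ : ℕ∞) (fun p : ℝ × ℝ => f p.1 p.2)

/-!
The involution `(u, ψ₁, ψ₂) ↦ (-u, ψ₂, ψ₁)` preserves the mKdV Lax pair and exchanges the two Miura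
potentials, so only `ψ₁` has to be treated. Differentiating `(ψ₁)_x = -u ψ₁ + Λ ψ₂` once more, the
terms `∓ u Λ ψ₂` cancel, which decouples `ψ₁` from `ψ₂`; in the time equation, `Λ ψ₂` is eliminated
in favour of `(ψ₁)_x + u ψ₁`.
-/

section LaxPairs

variable {𝕜 A : Type*} [NontriviallyNormedField 𝕜] [NormedCommRing A] [NormedAlgebra 𝕜 A]

/-- `(ψ₁, ψ₂)` solves the mKdV Lax pair with potential `u` and spectral parameter `Λ`, as functions
of `(x, t)`. The functions `u'` and `u''` are the first two `x`-derivatives of `u`; they are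
arguments, and all equations are `HasDerivAt` statements, so that no `deriv` can take a junk
value. -/
structure IsMKdVEigenvector (u u' u'' ψ₁ ψ₂ : 𝕜 → 𝕜 → A) (Λ : A) : Prop where
  potential_x : ∀ x t, HasDerivAt (fun y => u y t) (u' x t) x
  potential_xx : ∀ x t, HasDerivAt (fun y => u' y t) (u'' x t) x
  fst_x : ∀ x t, HasDerivAt (fun y => ψ₁ y t) (-u x t * ψ₁ x t + Λ * ψ₂ x t) x
  snd_x : ∀ x t, HasDerivAt (fun y => ψ₂ y t) (Λ * ψ₁ x t + u x t * ψ₂ x t) x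
  fst_t : ∀ x t, HasDerivAt (fun s => ψ₁ x s)
    ((u'' x t - 2 * u x t ^ 3 + 4 * Λ ^ 2 * u x t) * ψ₁ x t
      + 2 * Λ * (u x t ^ 2 - u' x t - 2 * Λ ^ 2) * ψ₂ x t) t
  snd_t : ∀ x t, HasDerivAt (fun s => ψ₂ x s)
    (2 * Λ * (u x t ^ 2 + u' x t - 2 * Λ ^ 2) * ψ₁ x t
      - (u'' x t - 2 * u x t ^ 3 + 4 * Λ ^ 2 * u x t) * ψ₂ x t) t

/-- `ψ` solves the scalar KdV Lax pair with potential `m` and spectral parameter `μ`, as a function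
of `(x, t)`. The functions `m'` and `ψ'` are the `x`-derivatives of `m` and `ψ`, given as arguments
for the same reason as in `IsMKdVEigenvector`. -/
structure IsKdVEigenfunction (m m' ψ ψ' : 𝕜 → 𝕜 → A) (μ : A) : Prop where
  potential_x : ∀ x t, HasDerivAt (fun y => m y t) (m' x t) x
  eigenfunction_x : ∀ x t, HasDerivAt (fun y => ψ y t) (ψ' x t) x
  eigenfunction_xx : ∀ x t, HasDerivAt (fun y => ψ' y t) ((m x t - μ) * ψ x t) x
  eigenfunction_t : ∀ x t, HasDerivAt (fun s => ψ x s)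
    ((2 * m x t + 4 * μ) * ψ' x t - m' x t * ψ x t) t

namespace IsMKdVEigenvector

variable {u u' u'' ψ₁ ψ₂ : 𝕜 → 𝕜 → A} {Λ : A}

theorem neg_swap (h : IsMKdVEigenvector u u' u'' ψ₁ ψ₂ Λ) :
    IsMKdVEigenvector (-u) (-u') (-u'') ψ₂ ψ₁ Λ where
  potential_x x t := (h.potential_x x t).neg
  potential_xx x t := (h.potential_xx x t).neg
  fst_x x t := (h.snd_x x t).congr_deriv (by simp only [Pi.neg_apply]; ring)
  snd_x x t := (h.fst_x x t).congr_deriv (by simp only [Pi.neg_apply]; ring)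
  fst_t x t := (h.snd_t x t).congr_deriv (by simp only [Pi.neg_apply]; ring)
  snd_t x t := (h.fst_t x t).congr_deriv (by simp only [Pi.neg_apply]; ring)

theorem isKdVEigenfunction_fst (h : IsMKdVEigenvector u u' u'' ψ₁ ψ₂ Λ) :
    IsKdVEigenfunction (fun x t => u x t ^ 2 - u' x t) (fun x t => 2 * u x t * u' x t - u'' x t)
      ψ₁ (fun x t => -u x t * ψ₁ x t + Λ * ψ₂ x t) (-Λ ^ 2) where
  potential_x x t :=
    (((h.potential_x x t).fun_pow 2).sub (h.potential_xx x t)).congr_deriv (by simp)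
  eigenfunction_x := h.fst_x
  eigenfunction_xx x t :=
    (((h.potential_x x t).neg.mul (h.fst_x x t)).add ((h.snd_x x t).const_mul Λ)).congr_deriv
      (by simp only [Pi.neg_apply]; ring)
  eigenfunction_t x t := (h.fst_t x t).congr_deriv (by ring)

theorem isKdVEigenfunction_snd (h : IsMKdVEigenvector u u' u'' ψ₁ ψ₂ Λ) :
    IsKdVEigenfunction (fun x t => u x t ^ 2 + u' x t) (fun x t => 2 * u x t * u' x t + u'' x t)
      ψ₂ (fun x t => Λ * ψ₁ x t + u x t * ψ₂ x t) (-Λ ^ 2) := by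
  simpa [add_comm] using h.neg_swap.isKdVEigenfunction_fst

end IsMKdVEigenvector

theorem mKdV_eigenvector_satisfies_KdV_scalar_LaxPair_general
    {u u' u'' ψ₁ ψ₂ : 𝕜 → 𝕜 → A} {Λ : A} (h : IsMKdVEigenvector u u' u'' ψ₁ ψ₂ Λ) :
    IsKdVEigenfunction (fun x t => u x t ^ 2 - u' x t) (fun x t => 2 * u x t * u' x t - u'' x t)
        ψ₁ (fun x t => -u x t * ψ₁ x t + Λ * ψ₂ x t) (-Λ ^ 2) ∧
      IsKdVEigenfunction (fun x t => u x t ^ 2 + u' x t) (fun x t => 2 * u x t * u' x t + u'' x t)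
        ψ₂ (fun x t => Λ * ψ₁ x t + u x t * ψ₂ x t) (-Λ ^ 2) :=
  ⟨h.isKdVEigenfunction_fst, h.isKdVEigenfunction_snd⟩

end LaxPairs

section PartialDerivatives

variable {f : ℝ → ℝ → ℝ}

theorem Smooth2.contDiff_comp₂ {E : Type*} [NormedAddCommGroup E] [NormedSpace ℝ E] {a b : E → ℝ}
    (hf : Smooth2 f) (ha : ContDiff ℝ (⊤ : ℕ∞) a) (hb : ContDiff ℝ (⊤ : ℕ∞) b) :
    ContDiff ℝ (⊤ : ℕ∞) (fun z => f (a z) (b z)) :=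
  ContDiff.comp (g := fun p : ℝ × ℝ => f p.1 p.2) hf (ha.prodMk hb)

theorem Smooth2.hasDerivAt_d1 (hf : Smooth2 f) (x t : ℝ) :
    HasDerivAt (fun y => f y t) (d1 f x t) x :=
  ((hf.contDiff_comp₂ contDiff_id contDiff_const).differentiable (by simp) x).hasDerivAt

theorem Smooth2.hasDerivAt_d2 (hf : Smooth2 f) (x t : ℝ) :
    HasDerivAt (fun s => f x s) (d2 f x t) t :=
  ((hf.contDiff_comp₂ contDiff_const contDiff_id).differentiable (by simp) t).hasDerivAt

theorem Smooth2.smooth2_d1 (hf : Smooth2 f) : Smooth2 (d1 f) :=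
  have hslices : ContDiff ℝ (⊤ : ℕ∞) (fun q : (ℝ × ℝ) × ℝ => f q.2 q.1.2) :=
    hf.contDiff_comp₂ contDiff_snd (contDiff_snd.comp contDiff_fst)
  ContDiff.fderiv_apply (f := fun (p : ℝ × ℝ) y => f y p.2) hslices contDiff_fst
    contDiff_const (by simp)

theorem IsKdVEigenfunction.d1_d1_eq_and_d2_eq {m m' ψ ψ' : ℝ → ℝ → ℝ} {μ : ℝ}
    (h : IsKdVEigenfunction m m' ψ ψ' μ) (x t : ℝ) :
    d1 (d1 ψ) x t = (m x t - μ) * ψ x t ∧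
      d2 ψ x t = (2 * m x t + 4 * μ) * d1 ψ x t - d1 m x t * ψ x t := by
  have hm : d1 m x t = m' x t := (h.potential_x x t).deriv
  have hψ : d1 ψ = ψ' := funext₂ fun y s => (h.eigenfunction_x y s).deriv
  rw [hψ, hm]
  exact ⟨(h.eigenfunction_xx x t).deriv, (h.eigenfunction_t x t).deriv⟩

end PartialDerivatives

/-- each component of the mKdV eigenvector satisfies the scalar KdV Lax
pair with potential `mᵢ = u² ∓ u_x` and spectral parameter `λ = −Λ²`. -/
theorem mKdV_eigenvector_satisfies_KdV_scalar_LaxPair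
    (u ψ₁ ψ₂ : ℝ → ℝ → ℝ) (Λ : ℝ)
    (hu : Smooth2 u) (hψ₁ : Smooth2 ψ₁) (hψ₂ : Smooth2 ψ₂)
    (hx1 : ∀ x t, d1 ψ₁ x t = -(u x t) * ψ₁ x t + Λ * ψ₂ x t)
    (hx2 : ∀ x t, d1 ψ₂ x t = Λ * ψ₁ x t + u x t * ψ₂ x t)
    (ht1 : ∀ x t, d2 ψ₁ x t =
      (d1 (d1 u) x t - 2 * (u x t) ^ 3 + 4 * Λ ^ 2 * u x t) * ψ₁ x t
        + 2 * Λ * ((u x t) ^ 2 - d1 u x t - 2 * Λ ^ 2) * ψ₂ x t)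
    (ht2 : ∀ x t, d2 ψ₂ x t =
      2 * Λ * ((u x t) ^ 2 + d1 u x t - 2 * Λ ^ 2) * ψ₁ x t
        - (d1 (d1 u) x t - 2 * (u x t) ^ 3 + 4 * Λ ^ 2 * u x t) * ψ₂ x t) :
    ∀ x t,
      (d1 (d1 ψ₁) x t =
          (((u x t) ^ 2 - d1 u x t) - (-Λ ^ 2)) * ψ₁ x t
        ∧ d2 ψ₁ x t =
          (2 * ((u x t) ^ 2 - d1 u x t) + 4 * (-Λ ^ 2)) * d1 ψ₁ x t
            - d1 (fun x t => (u x t) ^ 2 - d1 u x t) x t * ψ₁ x t)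
      ∧ (d1 (d1 ψ₂) x t =
          (((u x t) ^ 2 + d1 u x t) - (-Λ ^ 2)) * ψ₂ x t
        ∧ d2 ψ₂ x t =
          (2 * ((u x t) ^ 2 + d1 u x t) + 4 * (-Λ ^ 2)) * d1 ψ₂ x t
            - d1 (fun x t => (u x t) ^ 2 + d1 u x t) x t * ψ₂ x t) := by
  have h : IsMKdVEigenvector u (d1 u) (d1 (d1 u)) ψ₁ ψ₂ Λ :=
    { potential_x := hu.hasDerivAt_d1
      potential_xx := hu.smooth2_d1.hasDerivAt_d1
      fst_x := fun x t => hx1 x t ▸ hψ₁.hasDerivAt_d1 x t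
      snd_x := fun x t => hx2 x t ▸ hψ₂.hasDerivAt_d1 x t
      fst_t := fun x t => ht1 x t ▸ hψ₁.hasDerivAt_d2 x t
      snd_t := fun x t => ht2 x t ▸ hψ₂.hasDerivAt_d2 x t }
  obtain ⟨h₁, h₂⟩ := mKdV_eigenvector_satisfies_KdV_scalar_LaxPair_general h
  exact fun x t => ⟨h₁.d1_d1_eq_and_d2_eq x t, h₂.d1_d1_eq_and_d2_eq x t⟩
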